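/- Let f_1, f_2 : ℝ² → ℝ be convex polynomial functions with f_1(0,0) = f_2(0,0) = 0, let A = {(x, y, z) ∈ ℝ³ : z ≥ f_1(x, y) and z ≥ f_2(x, y)}, and let C = {(x, y, z) ∈ ℝ³ : z = f_1(x, y) = f_2(x, y)}. Let φ : ℝ → ℝ³ be analytic at 0 with φ(s) = (α_1, α_2, 0)s + (β_1, β_2, β_3)s² + O(s³) as s → 0, where (α_1, α_2) ≠ (0,0), and φ(s) ∈ C for all s in a neighborhood of 0. Let (a, b) ∈ ℝ², B = {t·(a, b, 0) : t ∈ ℝ}, and assume the three vectors (a, b, 0), (−∂f_1/∂x(0,0), −∂f_1/∂y(0,0), 1), (−∂f_2/∂x(0,0), −∂f_2/∂y(0,0), 1) are linearly independent. Suppose (a, b, 0) = c·(α_1, α_2, 0) for some c ≠ 0, and the unique solution (λ_1, λ_2, μ) of (β_1, β_2, β_3) = λ_1(−∂f_1/∂x(0,0), −∂f_1/∂y(0,0), 1) + λ_2(−∂f_2/∂x(0,0), −∂f_2/∂y(0,0), 1) + μ(a, b, 0) satisfies λ_1 > 0 and λ_2 > 0. Then there exists ε > 0 such that P_A(p) ∈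 C for every p ∈ B with ‖p‖ < ε. -/

import Mathlib

open Filter

/-- `u` is the metric projection of `p` onto `S`. -/
def IsMetricProj {E : Type*} [NormedAddCommGroup E] (S : Set E) (p u : E) : Prop :=
  u ∈ S ∧ ∀ s ∈ S, ‖u - p‖ ≤ ‖s - p‖

/-- The point (a, b, c) of Euclidean 3-space. -/
noncomputable def e3 (a b c : ℝ) : EuclideanSpace ℝ (Fin 3) :=
  (WithLp.equiv 2 (Fin 3 → ℝ)).symm ![a, b, c]

theorem aux_hasDeriv (f : MvPolynomial (Fin 2) ℝ) (x v : Fin 2 → ℝ) :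
    HasDerivAt (fun t : ℝ => MvPolynomial.eval (fun i => x i + t * v i) f)
      (MvPolynomial.eval x (MvPolynomial.pderiv 0 f) * v 0 +
        MvPolynomial.eval x (MvPolynomial.pderiv 1 f) * v 1) 0 := by
  induction f using MvPolynomial.induction_on with
  | C r => simpa using hasDerivAt_const (0 : ℝ) r
  | add p q hp hq =>
    simp only [map_add]
    refine (hp.add hq).congr_deriv ?_
    ring
  | mul_X p i hp =>
    have hX : HasDerivAt (fun t : ℝ => x i + t * v i) (v i) 0 := by
      simpa using ((hasDerivAt_id (0 : ℝ)).mul_const (v i)).const_add (x i)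
    have := hp.mul hX
    simp only [map_mul, MvPolynomial.eval_X]
    refine this.congr_deriv ?_
    fin_cases i <;> simp [MvPolynomial.pderiv_mul, MvPolynomial.pderiv_X, Pi.single_apply] <;> ring

theorem aux_grad (f : MvPolynomial (Fin 2) ℝ)
    (hf : ConvexOn ℝ Set.univ (fun v : Fin 2 → ℝ => MvPolynomial.eval v f)) (x y : Fin 2 → ℝ) :
    MvPolynomial.eval x f + MvPolynomial.eval x (MvPolynomial.pderiv 0 f) * (y 0 - x 0) +
      MvPolynomial.eval x (MvPolynomial.pderiv 1 f) * (y 1 - x 1) ≤ MvPolynomial.eval y f := by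
  have hd := aux_hasDeriv f x (fun i => y i - x i)
  have hc : ConvexOn ℝ Set.univ
      (fun t : ℝ => MvPolynomial.eval (fun i => x i + t * (y i - x i)) f) := by
    refine ⟨convex_univ, fun s _ t _ p q hp hq hpq => ?_⟩
    have := hf.2 (Set.mem_univ (fun i => x i + s * (y i - x i)))
      (Set.mem_univ (fun i => x i + t * (y i - x i))) hp hq hpq
    refine le_trans (le_of_eq ?_) this
    have : (fun i => x i + (p • s + q • t) * (y i - x i)) =
       p • (fun i => x i + s * (y i - x i)) + q • (fun i => x i + t * (y i - x i)) := by
      funext i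
      have hp' : p = 1 - q := by linarith
      subst hp'
      simp only [Pi.add_apply, Pi.smul_apply, smul_eq_mul]
      ring
    simp only [this]
  have := hc.le_slope_of_hasDerivAt (Set.mem_univ 0) (Set.mem_univ 1) one_pos hd
  simp [slope_def_field] at this
  linarith

theorem aux_limit {g : ℝ → ℝ} {al be : ℝ}
    (h : (fun s : ℝ => g s - al * s - be * s ^ 2) =O[nhds 0] fun s : ℝ => s ^ 3) :
    Tendsto (fun s => (g s - al * s) / s ^ 2) (nhdsWithin 0 {0}ᶜ) (nhds be) := by
  have h1 : (fun s : ℝ => (g s - al * s - be * s ^ 2) / s ^ 2) =O[nhdsWithin 0 {0}ᶜ]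
      fun s : ℝ => s := by
    have := (h.mono (nhdsWithin_le_nhds (s := {0}ᶜ))).mul
      (Asymptotics.isBigO_refl (fun s : ℝ => (s ^ 2)⁻¹) (nhdsWithin 0 {0}ᶜ))
    refine (this.congr' (Eventually.of_forall fun s => by simp [div_eq_mul_inv]) ?_)
    filter_upwards [self_mem_nhdsWithin] with s hs
    have : s ≠ 0 := hs
    field_simp
  have h2 : Tendsto (fun s : ℝ => s) (nhdsWithin 0 {0}ᶜ) (nhds 0) :=
    tendsto_nhdsWithin_of_tendsto_nhds tendsto_id
  have h3 := (h1.trans_tendsto h2).add_const be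
  rw [zero_add] at h3
  refine h3.congr' ?_
  filter_upwards [self_mem_nhdsWithin] with s hs
  have : s ≠ 0 := hs
  field_simp
  ring

theorem aux_limit' {g : ℝ → ℝ} {al be : ℝ}
    (h : (fun s : ℝ => g s - al * s - be * s ^ 2) =O[nhds 0] fun s : ℝ => s ^ 3) :
    Tendsto (fun s => g s / s) (nhdsWithin 0 {0}ᶜ) (nhds al) := by
  have h2 : Tendsto (fun s : ℝ => s) (nhdsWithin 0 {0}ᶜ) (nhds 0) :=
    tendsto_nhdsWithin_of_tendsto_nhds tendsto_id
  have := ((aux_limit h).mul h2).add_const al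
  rw [mul_zero, zero_add] at this
  refine this.congr' ?_
  filter_upwards [self_mem_nhdsWithin] with s hs
  have : s ≠ 0 := hs
  field_simp
  ring

theorem aux_zero {g : ℝ → ℝ} {al be : ℝ}
    (h : (fun s : ℝ => g s - al * s - be * s ^ 2) =O[nhds 0] fun s : ℝ => s ^ 3) : g 0 = 0 := by
  obtain ⟨c, hc⟩ := h.bound
  simpa using hc.self_of_nhds

/-- The local parametrisation argument. -/
theorem aux_core (X₁ X₂ X₃ P₁ Q₁ P₂ Q₂ : ℝ → ℝ) (α₁ α₂ β₁ β₂ β₃ l₁ l₂ m : ℝ)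
    (c1 : ∀ᶠ s in nhds 0, ContinuousAt X₁ s) (c2 : ∀ᶠ s in nhds 0, ContinuousAt X₂ s)
    (c3 : ∀ᶠ s in nhds 0, ContinuousAt X₃ s)
    (d1 : ∀ᶠ s in nhds 0, ContinuousAt P₁ s) (d2 : ∀ᶠ s in nhds 0, ContinuousAt Q₁ s)
    (d3 : ∀ᶠ s in nhds 0, ContinuousAt P₂ s) (d4 : ∀ᶠ s in nhds 0, ContinuousAt Q₂ s)
    (e1 : (fun s : ℝ => X₁ s - α₁ * s - β₁ * s ^ 2) =O[nhds 0] fun s : ℝ => s ^ 3)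
    (e2 : (fun s : ℝ => X₂ s - α₂ * s - β₂ * s ^ 2) =O[nhds 0] fun s : ℝ => s ^ 3)
    (e3 : (fun s : ℝ => X₃ s - 0 * s - β₃ * s ^ 2) =O[nhds 0] fun s : ℝ => s ^ 3)
    (hD : α₁ * (Q₁ 0 - Q₂ 0) - α₂ * (P₁ 0 - P₂ 0) ≠ 0)
    (b1 : β₁ = l₁ * P₁ 0 + l₂ * P₂ 0 + m * α₁)
    (b2 : β₂ = l₁ * Q₁ 0 + l₂ * Q₂ 0 + m * α₂)
    (b3 : β₃ = l₁ + l₂) (hl₁ : 0 < l₁) (hl₂ : 0 < l₂)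
    (G : ℝ → Prop) (hG : ∀ᶠ s in nhds 0, G s) :
    ∃ ε > 0, ∀ τ, |τ| < ε → ∃ s u v, G s ∧ 0 ≤ u ∧ 0 ≤ v ∧
      X₁ s = τ * α₁ + u * P₁ s + v * P₂ s ∧ X₂ s = τ * α₂ + u * Q₁ s + v * Q₂ s ∧
      X₃ s = u + v := by
  set D : ℝ → ℝ := fun s => α₁ * (Q₁ s - Q₂ s) - α₂ * (P₁ s - P₂ s) with hDd
  set h : ℝ → ℝ := fun s => (X₁ s * (Q₁ s - Q₂ s) - X₂ s * (P₁ s - P₂ s) +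
    X₃ s * (P₁ s * Q₂ s - Q₁ s * P₂ s)) / D s with hh
  set U : ℝ → ℝ := fun s => (α₁ * (X₂ s - Q₂ s * X₃ s) - α₂ * (X₁ s - P₂ s * X₃ s)) / D s with hU
  set V : ℝ → ℝ := fun s => (α₁ * (Q₁ s * X₃ s - X₂ s) - α₂ * (P₁ s * X₃ s - X₁ s)) / D s with hV
  have x1 := aux_zero e1
  have x2 := aux_zero e2
  have x3 := aux_zero e3
  have cD : ∀ᶠ s in nhds 0, ContinuousAt D s := by
    filter_upwards [d1, d2, d3, d4] with s _ _ _ _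
    fun_prop
  have nD : ∀ᶠ s in nhds 0, D s ≠ 0 := cD.self_of_nhds.eventually_ne hD
  have ch : ∀ᶠ s in nhds 0, ContinuousAt h s := by
    filter_upwards [c1, c2, c3, d1, d2, d3, d4, cD, nD] with s _ _ _ _ _ _ _ _ _
    exact ContinuousAt.div (by fun_prop) (by assumption) (by assumption)
  have W : ∀ {g : ℝ → ℝ}, (∀ᶠ s in nhds 0, ContinuousAt g s) →
      Tendsto g (nhdsWithin 0 {0}ᶜ) (nhds (g 0)) := fun hg =>
    hg.self_of_nhds.tendsto.mono_left nhdsWithin_le_nhds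
  have tP1 := W d1
  have tQ1 := W d2
  have tP2 := W d3
  have tQ2 := W d4
  have tD := W cD
  have hD' : D 0 ≠ 0 := hD
  have limh : Tendsto (fun s => h s / s) (nhdsWithin 0 {0}ᶜ) (nhds 1) := by
    have := ((((aux_limit' e1).mul (tQ1.sub tQ2)).sub ((aux_limit' e2).mul (tP1.sub tP2))).add
      ((aux_limit' e3).mul ((tP1.mul tQ2).sub (tQ1.mul tP2)))).div tD hD'
    have e : (α₁ * (Q₁ 0 - Q₂ 0) - α₂ * (P₁ 0 - P₂ 0) + 0 * (P₁ 0 * Q₂ 0 - Q₁ 0 * P₂ 0)) / D 0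
        = 1 := by
      rw [zero_mul, add_zero]; exact div_self hD'
    rw [e] at this
    refine this.congr fun s => ?_
    simp only [hh, Pi.div_apply]
    ring
  have limU : Tendsto (fun s => U s / s ^ 2) (nhdsWithin 0 {0}ᶜ) (nhds l₁) := by
    have := ((((aux_limit e2).sub (tQ2.mul (aux_limit e3))).const_mul α₁).sub
      (((aux_limit e1).sub (tP2.mul (aux_limit e3))).const_mul α₂)).div tD hD'
    have e : (α₁ * (β₂ - Q₂ 0 * β₃) - α₂ * (β₁ - P₂ 0 * β₃)) / D 0 = l₁ := by
      rw [div_eq_iff hD', b1, b2, b3, hDd]; ring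
    rw [e] at this
    refine this.congr fun s => ?_
    simp only [hU, Pi.div_apply]
    ring
  have limV : Tendsto (fun s => V s / s ^ 2) (nhdsWithin 0 {0}ᶜ) (nhds l₂) := by
    have := ((((tQ1.mul (aux_limit e3)).sub (aux_limit e2)).const_mul α₁).sub
      (((tP1.mul (aux_limit e3)).sub (aux_limit e1)).const_mul α₂)).div tD hD'
    have e : (α₁ * (Q₁ 0 * β₃ - β₂) - α₂ * (P₁ 0 * β₃ - β₁)) / D 0 = l₂ := by
      rw [div_eq_iff hD', b1, b2, b3, hDd]; ring
    rw [e] at this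
    refine this.congr fun s => ?_
    simp only [hV, Pi.div_apply]
    ring
  have pos := (limh.eventually (lt_mem_nhds one_pos)).and
    ((limU.eventually (lt_mem_nhds hl₁)).and (limV.eventually (lt_mem_nhds hl₂)))
  rw [eventually_nhdsWithin_iff] at pos
  obtain ⟨δ, hδ, H⟩ := Metric.eventually_nhds_iff.1 (pos.and (ch.and (nD.and hG)))
  have H' : ∀ s ∈ Set.Icc (-(δ/2)) (δ/2), _ := fun s hs => H (y := s) (by
    rw [Real.dist_eq, sub_zero, abs_lt]; constructor <;> linarith [hs.1, hs.2])
  have hp : 0 < h (δ/2) := by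
    have := ((H' (δ/2) ⟨by linarith, le_rfl⟩).1 (by simpa using hδ.ne')).1
    rw [lt_div_iff₀ (by linarith)] at this
    simpa using this
  have hn : h (-(δ/2)) < 0 := by
    have := ((H' (-(δ/2)) ⟨le_rfl, by linarith⟩).1 (by simpa using hδ.ne')).1
    rw [lt_div_iff_of_neg (by linarith)] at this
    simpa using this
  refine ⟨min (h (δ/2)) (-h (-(δ/2))), lt_min hp (by linarith), fun τ hτ => ?_⟩
  rw [lt_min_iff] at hτ
  have t1 := abs_lt.1 hτ.1
  have t2 := abs_lt.1 hτ.2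
  obtain ⟨s, hs, hsτ⟩ := intermediate_value_Icc (by linarith : -(δ/2) ≤ δ/2)
    (fun s hs => (H' s hs).2.1.continuousWithinAt) (show τ ∈ Set.Icc _ _ from
      ⟨by linarith [t2.1], by linarith [t1.2]⟩)
  have Hs := H' s hs
  have hDs := Hs.2.2.1
  refine ⟨s, U s, V s, Hs.2.2.2, ?_, ?_, ?_, ?_, ?_⟩
  · by_cases h0 : s = 0
    · subst h0; simp [hU, x1, x2, x3]
    · have := (Hs.1 h0).2.1
      rw [lt_div_iff₀ (by positivity)] at this
      linarith
  · by_cases h0 : s = 0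
    · subst h0; simp [hV, x1, x2, x3]
    · have := (Hs.1 h0).2.2
      rw [lt_div_iff₀ (by positivity)] at this
      linarith
  · rw [← hsτ]
    apply mul_right_cancel₀ hDs
    simp only [hh, hU, hV, add_mul, mul_right_comm _ _ (D s), div_mul_cancel₀ _ hDs]
    simp only [hDd]; ring
  · rw [← hsτ]
    apply mul_right_cancel₀ hDs
    simp only [hh, hU, hV, add_mul, mul_right_comm _ _ (D s), div_mul_cancel₀ _ hDs]
    simp only [hDd]; ring
  · apply mul_right_cancel₀ hDs
    simp only [hh, hU, hV, add_mul, div_mul_cancel₀ _ hDs]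
    simp only [hDd]; ring

set_option maxHeartbeats 1000000

theorem stmt10 (f₁ f₂ : MvPolynomial (Fin 2) ℝ)
    (hconv₁ : ConvexOn ℝ Set.univ (fun v : Fin 2 → ℝ => MvPolynomial.eval v f₁))
    (hconv₂ : ConvexOn ℝ Set.univ (fun v : Fin 2 → ℝ => MvPolynomial.eval v f₂))
    (h₁0 : MvPolynomial.eval (0 : Fin 2 → ℝ) f₁ = 0)
    (h₂0 : MvPolynomial.eval (0 : Fin 2 → ℝ) f₂ = 0)
    (A : Set (EuclideanSpace ℝ (Fin 3)))
    (hA : A = {p | MvPolynomial.eval ![p 0, p 1] f₁ ≤ p 2 ∧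
                   MvPolynomial.eval ![p 0, p 1] f₂ ≤ p 2})
    (C : Set (EuclideanSpace ℝ (Fin 3)))
    (hC : C = {p | p 2 = MvPolynomial.eval ![p 0, p 1] f₁ ∧
                   p 2 = MvPolynomial.eval ![p 0, p 1] f₂})
    (φ₁ φ₂ φ₃ : ℝ → ℝ)
    (hφa₁ : AnalyticAt ℝ φ₁ 0) (hφa₂ : AnalyticAt ℝ φ₂ 0) (hφa₃ : AnalyticAt ℝ φ₃ 0)
    (α₁ α₂ β₁ β₂ β₃ : ℝ) (hα : (α₁, α₂) ≠ (0, 0))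
    (hexp₁ : (fun s : ℝ => φ₁ s - α₁ * s - β₁ * s ^ 2) =O[nhds 0] fun s : ℝ => s ^ 3)
    (hexp₂ : (fun s : ℝ => φ₂ s - α₂ * s - β₂ * s ^ 2) =O[nhds 0] fun s : ℝ => s ^ 3)
    (hexp₃ : (fun s : ℝ => φ₃ s - β₃ * s ^ 2) =O[nhds 0] fun s : ℝ => s ^ 3)
    (hφC : ∀ᶠ s in nhds (0 : ℝ), e3 (φ₁ s) (φ₂ s) (φ₃ s) ∈ C)
    (a b : ℝ) (B : Set (EuclideanSpace ℝ (Fin 3)))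
    (hB : B = Set.range (fun t : ℝ => t • e3 a b 0))
    (hLI : LinearIndependent ℝ
      ![(![a, b, 0] : Fin 3 → ℝ),
        ![-MvPolynomial.eval (0 : Fin 2 → ℝ) (MvPolynomial.pderiv 0 f₁),
          -MvPolynomial.eval (0 : Fin 2 → ℝ) (MvPolynomial.pderiv 1 f₁), 1],
        ![-MvPolynomial.eval (0 : Fin 2 → ℝ) (MvPolynomial.pderiv 0 f₂),
          -MvPolynomial.eval (0 : Fin 2 → ℝ) (MvPolynomial.pderiv 1 f₂), 1]])
    (hpar : ∃ c : ℝ, c ≠ 0 ∧ a = c * α₁ ∧ b = c * α₂)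
    (hsol : ∃ lam₁ lam₂ μ : ℝ,
      (β₁ = lam₁ * (-MvPolynomial.eval (0 : Fin 2 → ℝ) (MvPolynomial.pderiv 0 f₁)) +
            lam₂ * (-MvPolynomial.eval (0 : Fin 2 → ℝ) (MvPolynomial.pderiv 0 f₂)) + μ * a ∧
       β₂ = lam₁ * (-MvPolynomial.eval (0 : Fin 2 → ℝ) (MvPolynomial.pderiv 1 f₁)) +
            lam₂ * (-MvPolynomial.eval (0 : Fin 2 → ℝ) (MvPolynomial.pderiv 1 f₂)) + μ * b ∧
       β₃ = lam₁ + lam₂) ∧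
      0 < lam₁ ∧ 0 < lam₂) :
    ∃ ε : ℝ, 0 < ε ∧ ∀ p ∈ B, ‖p‖ < ε → ∀ w, IsMetricProj A p w → w ∈ C := by
  obtain ⟨c, hc, ha, hb⟩ := hpar
  obtain ⟨l₁, l₂, μ, ⟨b1, b2, b3⟩, hl₁, hl₂⟩ := hsol
  have z1 := aux_zero hexp₁
  have z2 := aux_zero hexp₂
  have z0 : (![φ₁ 0, φ₂ 0] : Fin 2 → ℝ) = 0 := by
    rw [z1, z2]; funext i; fin_cases i <;> rfl
  have c1 := hφa₁.eventually_continuousAt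
  have c2 := hφa₂.eventually_continuousAt
  have c3 := hφa₃.eventually_continuousAt
  have K : ∀ g : MvPolynomial (Fin 2) ℝ, ∀ᶠ s in nhds (0 : ℝ),
      ContinuousAt (fun s => -MvPolynomial.eval (![φ₁ s, φ₂ s] : Fin 2 → ℝ) g) s := by
    intro g
    filter_upwards [c1, c2] with s h1 h2
    have hv : ContinuousAt (fun s => (![φ₁ s, φ₂ s] : Fin 2 → ℝ)) s := by
      rw [continuousAt_pi]
      intro i
      fin_cases i
      · exact h1
      · exact h2
    have hg : Continuous (fun v : Fin 2 → ℝ => MvPolynomial.eval v g) :=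
      MvPolynomial.continuous_eval g
    exact (ContinuousAt.comp' (f := fun s => (![φ₁ s, φ₂ s] : Fin 2 → ℝ))
      hg.continuousAt hv).neg
  have hdet : Matrix.det (Matrix.of ![(![a, b, 0] : Fin 3 → ℝ),
        ![-MvPolynomial.eval (0 : Fin 2 → ℝ) (MvPolynomial.pderiv 0 f₁),
          -MvPolynomial.eval (0 : Fin 2 → ℝ) (MvPolynomial.pderiv 1 f₁), 1],
        ![-MvPolynomial.eval (0 : Fin 2 → ℝ) (MvPolynomial.pderiv 0 f₂),
          -MvPolynomial.eval (0 : Fin 2 → ℝ) (MvPolynomial.pderiv 1 f₂), 1]]) ≠ 0 := by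
    have := (Matrix.linearIndependent_rows_iff_isUnit (A := Matrix.of _)).1 hLI
    rw [Matrix.isUnit_iff_isUnit_det] at this
    exact this.ne_zero
  obtain ⟨ε, hε, HH⟩ := aux_core φ₁ φ₂ φ₃
    (fun s => -MvPolynomial.eval (![φ₁ s, φ₂ s] : Fin 2 → ℝ) (MvPolynomial.pderiv 0 f₁))
    (fun s => -MvPolynomial.eval (![φ₁ s, φ₂ s] : Fin 2 → ℝ) (MvPolynomial.pderiv 1 f₁))
    (fun s => -MvPolynomial.eval (![φ₁ s, φ₂ s] : Fin 2 → ℝ) (MvPolynomial.pderiv 0 f₂))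
    (fun s => -MvPolynomial.eval (![φ₁ s, φ₂ s] : Fin 2 → ℝ) (MvPolynomial.pderiv 1 f₂))
    α₁ α₂ β₁ β₂ β₃ l₁ l₂ (μ * c) c1 c2 c3 (K _) (K _) (K _) (K _) hexp₁ hexp₂
    (by simpa using hexp₃)
    (by
      simp only [z0]
      intro h0
      apply hdet
      rw [Matrix.det_fin_three]
      simp [ha, hb]
      simp only [MvPolynomial.eval_zero] at h0
      linear_combination c * h0)
    (by simp only [z0]; rw [b1, ha]; ring)
    (by simp only [z0]; rw [b2, hb]; ring) b3 hl₁ hl₂ _ hφC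
  have hN : 0 < α₁ ^ 2 + α₂ ^ 2 := by
    by_contra hcon
    apply hα
    have h1 : α₁ = 0 := by nlinarith [sq_nonneg α₁, sq_nonneg α₂]
    have h2 : α₂ = 0 := by nlinarith [sq_nonneg α₁, sq_nonneg α₂]
    rw [h1, h2]
  refine ⟨ε * √(α₁ ^ 2 + α₂ ^ 2), by positivity, ?_⟩
  intro p hp hpn w hw
  rw [hB] at hp
  obtain ⟨t, rfl⟩ := hp
  have hpe : t • e3 a b 0 = e3 (t * c * α₁) (t * c * α₂) 0 := by
    ext i
    fin_cases i <;> simp [e3, ha, hb, mul_assoc]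
  simp only [hpe] at hpn hw
  have hn : ∀ x y z : ℝ, ‖e3 x y z‖ = √(x ^ 2 + y ^ 2 + z ^ 2) := by
    intro x y z
    rw [EuclideanSpace.norm_eq]
    simp [e3, Fin.sum_univ_three]
  have hτ : |t * c| < ε := by
    rw [hn, show (t * c * α₁) ^ 2 + (t * c * α₂) ^ 2 + 0 ^ 2 =
      (t * c) ^ 2 * (α₁ ^ 2 + α₂ ^ 2) by ring, Real.sqrt_mul (sq_nonneg _),
      Real.sqrt_sq_eq_abs] at hpn
    exact lt_of_mul_lt_mul_right hpn (Real.sqrt_nonneg _)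
  obtain ⟨s, u, v, hsC, hu, hv, q1, q2, q3⟩ := HH _ hτ
  have hsC' := hsC
  rw [hC] at hsC'
  have hs1 : φ₃ s = MvPolynomial.eval (![φ₁ s, φ₂ s] : Fin 2 → ℝ) f₁ := hsC'.1
  have hs2 : φ₃ s = MvPolynomial.eval (![φ₁ s, φ₂ s] : Fin 2 → ℝ) f₂ := hsC'.2
  have hsA : e3 (φ₁ s) (φ₂ s) (φ₃ s) ∈ A := by
    rw [hA]; exact ⟨hs1.ge, hs2.ge⟩
  obtain ⟨hwA, hwm⟩ := hw
  have hle := hwm _ hsA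
  rw [hA] at hwA
  obtain ⟨w1, w2⟩ := hwA
  have g1 := aux_grad f₁ hconv₁ ![φ₁ s, φ₂ s] ![w 0, w 1]
  have g2 := aux_grad f₂ hconv₂ ![φ₁ s, φ₂ s] ![w 0, w 1]
  simp only [Matrix.cons_val_zero, Matrix.cons_val_one] at g1 g2
  rw [EuclideanSpace.norm_eq, EuclideanSpace.norm_eq] at hle
  have hle2 := (Real.sqrt_le_sqrt_iff (by positivity)).1 hle
  simp [e3, Fin.sum_univ_three] at hle2
  generalize MvPolynomial.eval (![φ₁ s, φ₂ s] : Fin 2 → ℝ) (MvPolynomial.pderiv 0 f₁) = A1 at *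
  generalize MvPolynomial.eval (![φ₁ s, φ₂ s] : Fin 2 → ℝ) (MvPolynomial.pderiv 1 f₁) = A2 at *
  generalize MvPolynomial.eval (![φ₁ s, φ₂ s] : Fin 2 → ℝ) (MvPolynomial.pderiv 0 f₂) = B1 at *
  generalize MvPolynomial.eval (![φ₁ s, φ₂ s] : Fin 2 → ℝ) (MvPolynomial.pderiv 1 f₂) = B2 at *
  have k1 : 0 ≤ u * (w 2 - φ₃ s - A1 * (w 0 - φ₁ s) - A2 * (w 1 - φ₂ s)) :=
    mul_nonneg hu (by linarith)
  have k2 : 0 ≤ v * (w 2 - φ₃ s - B1 * (w 0 - φ₁ s) - B2 * (w 1 - φ₂ s)) :=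
    mul_nonneg hv (by linarith)
  have k3 : 0 ≤ (w 0 - φ₁ s) * (φ₁ s - t * c * α₁) + (w 1 - φ₂ s) * (φ₂ s - t * c * α₂) +
      (w 2 - φ₃ s) * φ₃ s := by
    have r1 : φ₁ s - t * c * α₁ = -(u * A1) - v * B1 := by linarith
    have r2 : φ₂ s - t * c * α₂ = -(u * A2) - v * B2 := by linarith
    have r3 : (w 2 - φ₃ s) * φ₃ s = (w 2 - φ₃ s) * (u + v) := by rw [← q3]
    rw [r1, r2, r3]
    linarith
  have k4 : (w 0 - φ₁ s) ^ 2 + (w 1 - φ₂ s) ^ 2 + (w 2 - φ₃ s) ^ 2 ≤ 0 := by linarith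
  have j0 : w 0 = φ₁ s := by
    have : (w 0 - φ₁ s) ^ 2 = 0 := le_antisymm (by linarith [sq_nonneg (w 1 - φ₂ s), sq_nonneg (w 2 - φ₃ s)]) (sq_nonneg _)
    exact sub_eq_zero.1 (pow_eq_zero_iff two_ne_zero |>.1 this)
  have j1 : w 1 = φ₂ s := by
    have : (w 1 - φ₂ s) ^ 2 = 0 := le_antisymm (by linarith [sq_nonneg (w 0 - φ₁ s), sq_nonneg (w 2 - φ₃ s)]) (sq_nonneg _)
    exact sub_eq_zero.1 (pow_eq_zero_iff two_ne_zero |>.1 this)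
  have j2 : w 2 = φ₃ s := by
    have : (w 2 - φ₃ s) ^ 2 = 0 := le_antisymm (by linarith [sq_nonneg (w 1 - φ₂ s), sq_nonneg (w 0 - φ₁ s)]) (sq_nonneg _)
    exact sub_eq_zero.1 (pow_eq_zero_iff two_ne_zero |>.1 this)
  rw [hC]
  refine ⟨?_, ?_⟩
  · rw [j0, j1, j2]; exact hs1
  · rw [j0, j1, j2]; exact hs2
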